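/- Let N ≥ 1, δ > 0, 0 < s < 1, and let G be an Orlicz function. Let (u_k)_{k∈ℕ} be a sequence of measurable functions on ℝ^N with sup_k (Ψ_{s,G,δ}(u_k) + Φ_G(u_k)) < ∞. Then there exist a measurable function u : ℝ^N → ℝ with Φ_G(u) < ∞ and Ψ_{s,G,δ}(u) < ∞, and a subsequence (u_{k_j}) such that for every compact set K ⊂ ℝ^N, ∫_K G(|u_{k_j}(x) − u(x)|) dx → 0 as j → ∞. -/

import Mathlib

/-!
The idea is to replace each `u k` by its means over the cells of a grid of cubes and to let the
grid size tend to zero.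

Within a cell of side `r`, Jensen's inequality and the convexity bound
`G(d) ≤ t ^ s * G(d / t ^ s)` for `t = |x - y| ≤ 1` show that the modular of the difference between
`u k` and its cell means is at most a constant times `r ^ s * Ψ(u k)`
(`lintegral_sub_cellAvg_le`), hence small uniformly in `k`. At a fixed grid size the cell means are
bounded uniformly in `k` and in the cell, since `|t| ≤ 1 + G(|t|) / G(1)` (`abs_cellAvg_le`). There
are countably many cells in a sequence of grids, so Tychonoff's theorem gives one subsequence along
which all cell means converge; for each `n` this defines a limiting step function `w n`.

With grid sizes decaying geometrically at a rate fixed by the `Δ₂` constant, the `w n` converge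
almost everywhere to some `v`. The quasi-triangle inequality
`G(|a + b|) ≤ c * (G(|a|) + G(|b|))`, dominated convergence at fixed scale and Fatou's lemma then
give modular convergence of the subsequence to `v` on every finite measure below Lebesgue measure
(`exists_modular_limit`), in particular on compact sets. Superlinear growth of `G` at infinity is
not needed. Applied to a weighted finite measure equivalent to Lebesgue measure, this convergence
provides a further subsequence converging almost everywhere (`exists_subseq_ae_tendsto`), and
Fatou's lemma bounds `Φ_G(v)` and `Ψ_{s,G,δ}(v)`.
-/

open MeasureTheory Metric Filter Set
open scoped ENNReal RealInnerProductSpace Topology NNReal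

noncomputable section

/-- Euclidean space `ℝ^N`. -/
abbrev Euc (N : ℕ) := EuclideanSpace ℝ (Fin N)

/-- `G : [0,∞) → [0,∞)` is an Orlicz function: continuous, convex, increasing,
`G 0 = 0`, superlinear at `0`, and satisfying the Δ₂ condition. -/
def IsOrlicz (G : ℝ → ℝ) : Prop :=
  (∀ t, 0 ≤ t → 0 ≤ G t) ∧
  ContinuousOn G (Set.Ici 0) ∧
  ConvexOn ℝ (Set.Ici 0) G ∧
  StrictMonoOn G (Set.Ici 0) ∧
  G 0 = 0 ∧
  Tendsto (fun t => G t / t) (𝓝[>] (0:ℝ)) (𝓝 0) ∧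
  ∃ c > 2, ∀ t ≥ (0:ℝ), G (2 * t) ≤ c * G t

/-- `f` is regularly varying at `0` (from the right) with index `ρ`. -/
def RegVaryAtZero (f : ℝ → ℝ) (ρ : ℝ) : Prop :=
  ∀ lam > (0:ℝ), Tendsto (fun t => f (lam * t) / f t) (𝓝[>] (0:ℝ)) (𝓝 (lam ^ ρ))

/-- Hypotheses (H): `G` is a (piecewise) smooth Orlicz function, regularly varying at `0`
of index `p`, its derivative is regularly varying at `0` of index `p - 1`, and
`ℓ(t) = G(t)/t^p` is bounded below by a positive constant. -/
def HypH (G : ℝ → ℝ) (p : ℝ) : Prop :=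
  IsOrlicz G ∧ RegVaryAtZero G p ∧
  (∃ g : ℝ → ℝ, (∀ t > (0:ℝ), HasDerivAt G (g t) t) ∧ RegVaryAtZero g (p - 1)) ∧
  ∃ c > (0:ℝ), ∀ t > (0:ℝ), c ≤ G t / t ^ p

/-- The modular `Φ_G(u) = ∫_{ℝ^N} G(|u|) dx`. -/
def PhiG (N : ℕ) (G : ℝ → ℝ) (u : Euc N → ℝ) : ℝ≥0∞ :=
  ∫⁻ x, ENNReal.ofReal (G |u x|)

/-- The truncated nonlocal energy
`Ψ_{s,G,δ}(u) = ∫_{ℝ^N} ∫_{B(x,δ)} G(|u(x)-u(y)|/|x-y|^s) |x-y|^{-N} dy dx`. -/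
def PsiG (N : ℕ) (s δ : ℝ) (G : ℝ → ℝ) (u : Euc N → ℝ) : ℝ≥0∞ :=
  ∫⁻ x, ∫⁻ y in ball x δ,
    ENNReal.ofReal (G (|u x - u y| / ‖x - y‖ ^ s) / ‖x - y‖ ^ (N : ℝ))

/-- `V` is the weak gradient of `u`:
`∫ u ∂φ/∂xᵢ = -∫ Vᵢ φ` for every test function `φ ∈ C_c^∞` and every `i`. -/
def HasWeakGradient (N : ℕ) (u : Euc N → ℝ) (V : Euc N → Euc N) : Prop :=
  LocallyIntegrable u volume ∧ LocallyIntegrable V volume ∧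
  ∀ φ : Euc N → ℝ, ContDiff ℝ (⊤ : ℕ∞) φ → HasCompactSupport φ → ∀ i : Fin N,
    ∫ x, u x * fderiv ℝ φ x (EuclideanSpace.single i 1) = -∫ x, V x i * φ x

/-- `K_{N,p} = ∫_{𝕊^{N-1}} |w·e|^p dσ(w)`, where `σ` is the surface measure on the
unit sphere of `ℝ^N`. -/
def sphereK (N : ℕ) (p : ℝ) (e : Euc N) : ℝ :=
  ∫ w : sphere (0 : Euc N) 1, |(⟪(w : Euc N), e⟫)| ^ p
    ∂((volume : Measure (Euc N)).toSphere)

/-- Surface area of the unit sphere `𝕊^{N-1} ⊂ ℝ^N`. -/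
def sphereArea (N : ℕ) : ℝ :=
  (((volume : Measure (Euc N)).toSphere) Set.univ).toReal

end


/-! ### The extended-valued modular integrand -/

/-- The integrand `G(|t|)` as an extended nonnegative number, so that
`PhiG N G u = ∫⁻ x, orl G (u x)`. -/
noncomputable def orl (G : ℝ → ℝ) (t : ℝ) : ℝ≥0∞ := ENNReal.ofReal (G |t|)

lemma IsOrlicz.continuous_abs {G : ℝ → ℝ} (hG : IsOrlicz G) : Continuous fun t => G |t| :=
  hG.2.1.comp_continuous _root_.continuous_abs fun t => abs_nonneg t

lemma IsOrlicz.mono {G : ℝ → ℝ} (hG : IsOrlicz G) {a b : ℝ} (ha : 0 ≤ a) (hab : a ≤ b) :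
    G a ≤ G b :=
  hG.2.2.2.1.monotoneOn ha (ha.trans hab) hab

lemma IsOrlicz.pos {G : ℝ → ℝ} (hG : IsOrlicz G) {t : ℝ} (ht : 0 < t) : 0 < G t := by
  have := hG.2.2.2.1 (Set.mem_Ici.2 le_rfl) (Set.mem_Ici.2 ht.le) ht
  rwa [hG.2.2.2.2.1] at this

lemma IsOrlicz.scale {G : ℝ → ℝ} (hG : IsOrlicz G) {l t : ℝ} (hl : 0 ≤ l) (hl1 : l ≤ 1)
    (ht : 0 ≤ t) : G (l * t) ≤ l * G t := by
  have := hG.2.2.1.2 (Set.mem_Ici.2 ht) (Set.mem_Ici.2 le_rfl) hl (sub_nonneg.2 hl1) (by ring)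
  simpa [hG.2.2.2.2.1] using this

/-- Convexity gives at least linear growth beyond `1`, whence `L^G ⊂ L¹_loc`. -/
lemma IsOrlicz.abs_le {G : ℝ → ℝ} (hG : IsOrlicz G) (t : ℝ) : |t| ≤ 1 + (G 1)⁻¹ * G |t| := by
  have h1 := hG.pos one_pos
  have h0 := hG.1 |t| (abs_nonneg t)
  rcases le_total |t| 1 with h | h
  · have : 0 ≤ (G 1)⁻¹ * G |t| := by positivity
    linarith
  · have ht : 0 < |t| := by linarith
    have := hG.scale (l := |t|⁻¹) (t := |t|) (by positivity) (inv_le_one_of_one_le₀ h)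
      (abs_nonneg t)
    rw [inv_mul_cancel₀ ht.ne', inv_mul_eq_div, le_div_iff₀ ht] at this
    have h2 : |t| ≤ (G 1)⁻¹ * G |t| := by
      rw [inv_mul_eq_div, le_div_iff₀ h1]; linarith
    linarith

lemma IsOrlicz.convexOn_abs {G : ℝ → ℝ} (hG : IsOrlicz G) :
    ConvexOn ℝ Set.univ fun t => G |t| := by
  refine ⟨convex_univ, fun x _ y _ a b ha hb hab => ?_⟩
  refine le_trans (hG.mono (abs_nonneg _) ?_)
    (hG.2.2.1.2 (Set.mem_Ici.2 (abs_nonneg x)) (Set.mem_Ici.2 (abs_nonneg y)) ha hb hab)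
  simp only [smul_eq_mul]
  refine (abs_add_le _ _).trans ?_
  rw [abs_mul, abs_mul, abs_of_nonneg ha, abs_of_nonneg hb]

/-- The modular quasi-triangle inequality, a consequence of `Δ₂`. -/
lemma IsOrlicz.add_le {G : ℝ → ℝ} (hG : IsOrlicz G) {c : ℝ} (hc : 2 < c)
    (h2 : ∀ t ≥ (0:ℝ), G (2 * t) ≤ c * G t) (a b : ℝ) :
    G |a + b| ≤ c * (G |a| + G |b|) := by
  have key : ∀ a b : ℝ, |a| ≤ |b| → G |a + b| ≤ c * (G |a| + G |b|) := by
    intro a b hab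
    calc G |a + b| ≤ G (2 * |b|) :=
          hG.mono (abs_nonneg _) ((abs_add_le a b).trans (by linarith))
      _ ≤ c * G |b| := h2 _ (abs_nonneg b)
      _ ≤ _ := by
        have := hG.1 _ (abs_nonneg a)
        gcongr; linarith
  rcases le_total |a| |b| with h | h
  · exact key a b h
  · rw [add_comm a, add_comm (G _)]; exact key b a h

lemma orl_continuous {G : ℝ → ℝ} (hG : IsOrlicz G) : Continuous (orl G) :=
  ENNReal.continuous_ofReal.comp hG.continuous_abs

lemma orl_zero {G : ℝ → ℝ} (hG : IsOrlicz G) : orl G 0 = 0 := by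
  simp [orl, hG.2.2.2.2.1]

lemma orl_neg (G : ℝ → ℝ) (t : ℝ) : orl G (-t) = orl G t := by simp [orl]

lemma orl_mono {G : ℝ → ℝ} (hG : IsOrlicz G) {a b : ℝ} (h : |a| ≤ |b|) : orl G a ≤ orl G b :=
  ENNReal.ofReal_le_ofReal (hG.mono (abs_nonneg _) h)

lemma orl_add_le {G : ℝ → ℝ} (hG : IsOrlicz G) {c : ℝ} (hc : 2 < c)
    (h2 : ∀ t ≥ (0:ℝ), G (2 * t) ≤ c * G t) (a b : ℝ) :
    orl G (a + b) ≤ ENNReal.ofReal c * (orl G a + orl G b) := by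
  unfold orl
  rw [← ENNReal.ofReal_add (hG.1 _ (abs_nonneg a)) (hG.1 _ (abs_nonneg b)),
    ← ENNReal.ofReal_mul (by linarith)]
  exact ENNReal.ofReal_le_ofReal (hG.add_le hc h2 a b)

lemma orl_two_pow_mul_le {G : ℝ → ℝ} {c : ℝ} (hc : 2 < c)
    (h2 : ∀ t ≥ (0:ℝ), G (2 * t) ≤ c * G t) (n : ℕ) (a : ℝ) :
    orl G (2 ^ n * a) ≤ ENNReal.ofReal c ^ n * orl G a := by
  induction n with
  | zero => simp
  | succ n ih =>
    have : orl G (2 ^ (n + 1) * a) ≤ ENNReal.ofReal c * orl G (2 ^ n * a) := by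
      unfold orl
      rw [← ENNReal.ofReal_mul (by linarith)]
      refine ENNReal.ofReal_le_ofReal ?_
      have := h2 |2 ^ n * a| (abs_nonneg _)
      rwa [show (2:ℝ) * |2 ^ n * a| = |2 ^ (n + 1) * a| by
        rw [pow_succ', mul_assoc, abs_mul (2:ℝ)]; simp] at this
    calc _ ≤ _ := this
      _ ≤ ENNReal.ofReal c * (ENNReal.ofReal c ^ n * orl G a) := by gcongr
      _ = _ := by rw [pow_succ', mul_assoc]

/-- Smallness of `G(|t|)` forces smallness of `|t|`, by strict monotonicity. -/
lemma tendsto_zero_of_orl {G : ℝ → ℝ} (hG : IsOrlicz G) {f : ℕ → ℝ}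
    (h : Tendsto (fun k => orl G (f k)) atTop (𝓝 0)) : Tendsto f atTop (𝓝 0) := by
  rw [Metric.tendsto_atTop]
  intro ε hε
  have hp : (0:ℝ≥0∞) < orl G ε := by
    simpa [orl, abs_of_pos hε] using hG.pos hε
  obtain ⟨k0, hk0⟩ := eventually_atTop.1 (h.eventually_lt_const hp)
  refine ⟨k0, fun k hk => ?_⟩
  by_contra! hcon
  refine absurd (hk0 k hk) (not_lt.2 (orl_mono hG ?_))
  simpa [abs_of_pos hε] using hcon

lemma lintegral_orl_add_le {α : Type*} [MeasurableSpace α] {μ : Measure α}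
    {G : ℝ → ℝ} (hG : IsOrlicz G) {c : ℝ} (hc : 2 < c)
    (h2 : ∀ t ≥ (0:ℝ), G (2 * t) ≤ c * G t) {f g : α → ℝ} (hf : Measurable f) :
    ∫⁻ x, orl G (f x + g x) ∂μ ≤
      ENNReal.ofReal c * (∫⁻ x, orl G (f x) ∂μ + ∫⁻ x, orl G (g x) ∂μ) := by
  have hm : Measurable fun x => orl G (f x) := (orl_continuous hG).measurable.comp hf
  rw [← lintegral_add_left hm, ← lintegral_const_mul' _ _ ENNReal.ofReal_ne_top]
  exact lintegral_mono fun x => orl_add_le hG hc h2 _ _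

/-- Fatou's lemma for a convergent sequence with uniformly bounded integrals. -/
lemma lintegral_le_of_ae_tendsto {α : Type*} [MeasurableSpace α] {μ : Measure α}
    {F : ℕ → α → ℝ≥0∞} {f : α → ℝ≥0∞} {B : ℝ≥0∞} (hF : ∀ k, Measurable (F k))
    (hlim : ∀ᵐ x ∂μ, Tendsto (fun k => F k x) atTop (𝓝 (f x)))
    (hB : ∀ᶠ k in atTop, ∫⁻ x, F k x ∂μ ≤ B) : ∫⁻ x, f x ∂μ ≤ B := by
  calc ∫⁻ x, f x ∂μ = ∫⁻ x, liminf (fun k => F k x) atTop ∂μ :=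
        lintegral_congr_ae (hlim.mono fun x hx => hx.liminf_eq.symm)
    _ ≤ liminf (fun k => ∫⁻ x, F k x ∂μ) atTop := lintegral_liminf_le hF
    _ ≤ liminf (fun _ : ℕ => B) atTop := liminf_le_liminf hB
    _ = B := by simp

/-! ### Averages over a grid of cubes -/

/-- The index of the cell containing `x` in the grid of half-open cubes of side `r`. -/
noncomputable def cellIdx {N : ℕ} (r : ℝ) (x : Euc N) : Fin N → ℤ := fun i => ⌊x i / r⌋

/-- The half-open cube of side `r` with index `ν`. -/
def cell {N : ℕ} (r : ℝ) (ν : Fin N → ℤ) : Set (Euc N) := cellIdx r ⁻¹' {ν}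

/-- The mean value of `u` over the cube of side `r` with index `ν`. -/
noncomputable def cellAvg {N : ℕ} (r : ℝ) (u : Euc N → ℝ) (ν : Fin N → ℤ) : ℝ :=
  ⨍ y in cell r ν, u y

lemma measurable_cellIdx {N : ℕ} (r : ℝ) : Measurable (cellIdx (N := N) r) := by
  unfold cellIdx
  refine measurable_pi_lambda _ fun i => Int.measurable_floor.comp ?_
  fun_prop

lemma measurableSet_cell {N : ℕ} (r : ℝ) (ν : Fin N → ℤ) : MeasurableSet (cell r ν) :=
  measurable_cellIdx r (measurableSet_singleton ν)

lemma volume_cell {N : ℕ} {r : ℝ} (hr : 0 < r) (ν : Fin N → ℤ) :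
    volume (cell r ν) = ENNReal.ofReal (r ^ N) := by
  have h : cell r ν = (@WithLp.ofLp 2 (Fin N → ℝ)) ⁻¹'
      (Set.univ.pi fun i => Set.Ico (ν i * r) ((ν i + 1) * r)) := by
    ext x
    simp only [cell, cellIdx, Set.mem_preimage, Set.mem_singleton_iff, funext_iff,
      Int.floor_eq_iff, Set.mem_pi, Set.mem_univ, true_imp_iff, Set.mem_Ico,
      le_div_iff₀ hr, div_lt_iff₀ hr]
  rw [h, (PiLp.volume_preserving_ofLp (Fin N)).measure_preimage
    (MeasurableSet.univ_pi fun i => measurableSet_Ico).nullMeasurableSet, volume_pi_pi]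
  have : ∀ i, volume (Set.Ico ((ν i : ℝ) * r) ((ν i + 1) * r)) = ENNReal.ofReal r := by
    intro i; rw [Real.volume_Ico]; ring_nf
  simp [this, ENNReal.ofReal_pow hr.le]

lemma norm_sub_lt_of_mem_cell {N : ℕ} {r : ℝ} (hr : 0 < r) {x y : Euc N}
    (h : cellIdx r y = cellIdx r x) : ‖x - y‖ < (N + 1) * r := by
  rw [EuclideanSpace.norm_eq, Real.sqrt_lt' (by positivity)]
  have hi : ∀ i, ‖(x - y) i‖ ^ 2 ≤ r ^ 2 := by
    intro i
    have h1 := congrFun h i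
    simp only [cellIdx] at h1
    have h2 := Int.abs_sub_lt_one_of_floor_eq_floor h1
    rw [← sub_div, abs_div, abs_of_pos hr, div_lt_one hr, abs_sub_comm] at h2
    have : ‖(x - y) i‖ ≤ r := by simpa using h2.le
    gcongr
  calc ∑ i, ‖(x - y) i‖ ^ 2 ≤ ∑ _i : Fin N, r ^ 2 := Finset.sum_le_sum fun i _ => hi i
    _ = N * r ^ 2 := by simp
    _ < ((N + 1) * r) ^ 2 := by
      have : (0:ℝ) < r ^ 2 := by positivity
      have : (0:ℝ) ≤ N := by positivity
      rw [mul_pow]; gcongr; nlinarith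

lemma integrable_orl {N : ℕ} {G : ℝ → ℝ} (hG : IsOrlicz G) {u : Euc N → ℝ}
    (hu : Measurable u) (hΦ : PhiG N G u ≠ ⊤) : Integrable fun x => G |u x| := by
  refine ⟨(hG.continuous_abs.measurable.comp hu).aestronglyMeasurable, ?_⟩
  rw [hasFiniteIntegral_iff_ofReal (Eventually.of_forall fun x => hG.1 _ (abs_nonneg _))]
  exact lt_top_iff_ne_top.2 hΦ

lemma integrableOn_cell {N : ℕ} {G : ℝ → ℝ} (hG : IsOrlicz G) {u : Euc N → ℝ}
    (hu : Measurable u) (hΦ : PhiG N G u ≠ ⊤) {r : ℝ} (hr : 0 < r) (ν : Fin N → ℤ) :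
    IntegrableOn u (cell r ν) := by
  have hfin : volume (cell r ν) ≠ ⊤ := by rw [volume_cell hr]; exact ENNReal.ofReal_ne_top
  have : IntegrableOn (fun x => 1 + (G 1)⁻¹ * G |u x|) (cell r ν) :=
    (integrableOn_const hfin).add ((integrable_orl hG hu hΦ).integrableOn.const_mul _)
  refine Integrable.mono' this hu.aestronglyMeasurable (Eventually.of_forall fun x => ?_)
  exact hG.abs_le _

lemma abs_cellAvg_le {N : ℕ} {G : ℝ → ℝ} (hG : IsOrlicz G) {u : Euc N → ℝ}
    (hu : Measurable u) {M : ℝ≥0∞} (hM : M ≠ ⊤) (hΦ : PhiG N G u ≤ M) {r : ℝ} (hr : 0 < r)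
    (ν : Fin N → ℤ) :
    |cellAvg r u ν| ≤ 1 + (r ^ N)⁻¹ * ((G 1)⁻¹ * M.toReal) := by
  have hΦ' : PhiG N G u ≠ ⊤ := ne_top_of_le_ne_top hM hΦ
  have hfin : volume (cell r ν) ≠ ⊤ := by rw [volume_cell hr]; exact ENNReal.ofReal_ne_top
  have hreal : volume.real (cell r ν) = r ^ N := by
    rw [Measure.real, volume_cell hr, ENNReal.toReal_ofReal (by positivity)]
  have hint := integrable_orl hG hu hΦ'
  have h1 := hG.pos one_pos
  have hle : ∫ x, G |u x| ≤ M.toReal := by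
    rw [integral_eq_lintegral_of_nonneg_ae (Eventually.of_forall fun x => hG.1 _ (abs_nonneg _))
      hint.1]
    exact ENNReal.toReal_mono hM hΦ
  have hI : |∫ y in cell r ν, u y| ≤ r ^ N + (G 1)⁻¹ * M.toReal := by
    calc |∫ y in cell r ν, u y| ≤ ∫ y in cell r ν, |u y| := abs_integral_le_integral_abs
      _ ≤ ∫ y in cell r ν, (1 + (G 1)⁻¹ * G |u y|) :=
        integral_mono (integrableOn_cell hG hu hΦ' hr ν).abs
          ((integrableOn_const hfin).add (hint.integrableOn.const_mul _)) fun y => hG.abs_le _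
      _ = r ^ N + (G 1)⁻¹ * ∫ y in cell r ν, G |u y| := by
        have hone : Integrable (fun _ : Euc N => (1:ℝ)) (volume.restrict (cell r ν)) :=
          integrableOn_const hfin
        rw [integral_add hone (hint.integrableOn.const_mul _),
          integral_const_mul]
        simp [hreal]
      _ ≤ r ^ N + (G 1)⁻¹ * M.toReal := by
        gcongr
        exact (setIntegral_le_integral hint
          (Eventually.of_forall fun x => hG.1 _ (abs_nonneg _))).trans hle
  rw [cellAvg, setAverage_eq, hreal, smul_eq_mul, abs_mul, abs_of_pos (by positivity)]
  calc (r ^ N)⁻¹ * |∫ y in cell r ν, u y| ≤ (r ^ N)⁻¹ * (r ^ N + (G 1)⁻¹ * M.toReal) := by gcongr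
    _ = _ := by rw [mul_add, inv_mul_cancel₀ (by positivity)]

/-- Jensen's inequality on a cell, in extended-valued form. -/
lemma orl_sub_cellAvg_le {N : ℕ} {G : ℝ → ℝ} (hG : IsOrlicz G) {u : Euc N → ℝ}
    (hu : Measurable u) (hΦ : PhiG N G u ≠ ⊤) {r : ℝ} (hr : 0 < r) (ν : Fin N → ℤ) (a : ℝ) :
    orl G (a - cellAvg r u ν) ≤
      ENNReal.ofReal ((r ^ N)⁻¹) * ∫⁻ y in cell r ν, orl G (a - u y) := by
  obtain ⟨c, hc, h2⟩ := hG.2.2.2.2.2.2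
  have hfin : volume (cell r ν) ≠ ⊤ := by rw [volume_cell hr]; exact ENNReal.ofReal_ne_top
  have hne : volume (cell r ν) ≠ 0 := by
    rw [volume_cell hr]; simpa using pow_pos hr N
  have hreal : volume.real (cell r ν) = r ^ N := by
    rw [Measure.real, volume_cell hr, ENNReal.toReal_ofReal (by positivity)]
  have hui := integrableOn_cell hG hu hΦ hr ν
  have hgi : IntegrableOn ((fun t => G |t|) ∘ fun y => a - u y) (cell r ν) := by
    have : IntegrableOn (fun y => c * (G |a| + G |u y|)) (cell r ν) :=
      ((integrableOn_const hfin).add (integrable_orl hG hu hΦ).integrableOn).const_mul _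
    refine Integrable.mono' this (hG.continuous_abs.measurable.comp
      (measurable_const.sub hu)).aestronglyMeasurable (Eventually.of_forall fun y => ?_)
    rw [Function.comp, Real.norm_of_nonneg (hG.1 _ (abs_nonneg _)), sub_eq_add_neg]
    simpa using hG.add_le hc h2 a (-u y)
  have hJ := hG.convexOn_abs.map_set_average_le (f := fun y => a - u y)
    hG.continuous_abs.continuousOn isClosed_univ hne hfin (by simp)
    ((integrableOn_const hfin).sub hui) hgi
  have hav : ⨍ y in cell r ν, (a - u y) = a - cellAvg r u ν := by
    have hconst : Integrable (fun _ : Euc N => a) (volume.restrict (cell r ν)) :=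
      integrableOn_const hfin
    rw [cellAvg, setAverage_eq, setAverage_eq, integral_sub hconst hui, smul_sub]
    simp [hreal, (pow_pos hr N).ne']
  rw [hav, setAverage_eq, hreal, smul_eq_mul] at hJ
  calc orl G (a - cellAvg r u ν) ≤
        ENNReal.ofReal ((r ^ N)⁻¹ * ∫ y in cell r ν, G |a - u y|) := ENNReal.ofReal_le_ofReal hJ
    _ = _ := by
      have hgi' : Integrable (fun y => G |a - u y|) (volume.restrict (cell r ν)) := hgi
      rw [ENNReal.ofReal_mul (by positivity), ofReal_integral_eq_lintegral_ofReal hgi'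
        (Eventually.of_forall fun y => hG.1 _ (abs_nonneg _))]
      rfl

/-- The approximation estimate: replacing `u` by its cell means costs at most a multiple of
`r ^ s * Ψ(u)`. For `t = |x - y| ≤ 1` convexity gives
`G(|u x - u y|) ≤ t ^ s * G(|u x - u y| / t ^ s)`, and `t < (N + 1) * r` within a cell of
volume `r ^ N`. -/
lemma lintegral_sub_cellAvg_le {N : ℕ} {G : ℝ → ℝ} (hG : IsOrlicz G) {s δ : ℝ} (hs0 : 0 < s)
    {u : Euc N → ℝ} (hu : Measurable u) (hΦ : PhiG N G u ≠ ⊤) {r : ℝ} (hr : 0 < r)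
    (hrδ : (N + 1) * r ≤ δ) (hr1 : (N + 1) * r ≤ 1) :
    ∫⁻ x, orl G (u x - cellAvg r u (cellIdx r x)) ≤
      ENNReal.ofReal ((N + 1 : ℝ) ^ (s + N) * r ^ s) * PsiG N s δ G u := by
  unfold PsiG
  rw [← lintegral_const_mul' _ _ ENNReal.ofReal_ne_top]
  refine lintegral_mono fun x => (orl_sub_cellAvg_le hG hu hΦ hr _ _).trans ?_
  set ρ : ℝ := (N + 1) * r with hρ
  have hρ0 : 0 < ρ := by positivity
  have hconst : (N + 1 : ℝ) ^ (s + N) * r ^ s = (r ^ N)⁻¹ * ρ ^ (s + N) := by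
    rw [hρ, Real.mul_rpow (by positivity) hr.le, Real.rpow_add hr, Real.rpow_natCast]
    field_simp
  rw [hconst, ENNReal.ofReal_mul (by positivity), mul_assoc]
  gcongr
  rw [← lintegral_const_mul' _ _ ENNReal.ofReal_ne_top]
  have hsub : cell r (cellIdx r x) ⊆ ball x δ := by
    intro y hy
    rw [mem_ball, dist_comm, dist_eq_norm]
    exact (norm_sub_lt_of_mem_cell hr hy).trans_le hrδ
  refine le_trans ?_ (lintegral_mono_set hsub)
  refine setLIntegral_mono' (measurableSet_cell _ _) fun y hy => ?_
  rw [← ENNReal.ofReal_mul (by positivity), orl]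
  refine ENNReal.ofReal_le_ofReal ?_
  have ht := norm_sub_lt_of_mem_cell hr hy
  rcases eq_or_ne x y with rfl | hxy
  · simp [hG.2.2.2.2.1]
  set t := ‖x - y‖ with htdef
  have ht0 : 0 < t := norm_pos_iff.2 (sub_ne_zero.2 hxy)
  have hts : 0 < t ^ s := Real.rpow_pos_of_pos ht0 s
  have htN : 0 < t ^ (N : ℝ) := Real.rpow_pos_of_pos ht0 _
  have hsc := hG.scale (l := t ^ s) (t := |u x - u y| / t ^ s) hts.le
    (Real.rpow_le_one ht0.le (ht.le.trans hr1) hs0.le) (by positivity)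
  rw [mul_div_cancel₀ _ hts.ne'] at hsc
  have hG0 := hG.1 (|u x - u y| / t ^ s) (by positivity)
  calc G |u x - u y| ≤ t ^ s * G (|u x - u y| / t ^ s) := hsc
    _ = t ^ (s + N) * (G (|u x - u y| / t ^ s) / t ^ (N : ℝ)) := by
      rw [Real.rpow_add ht0]; field_simp
    _ ≤ ρ ^ (s + N) * (G (|u x - u y| / t ^ s) / t ^ (N : ℝ)) := by
      gcongr

/-! ### From finite-scale approximation to modular convergence -/

/-- If the `u k` are approximated at each scale `n`, uniformly in `k`, by bounded functions `a n k`
that converge pointwise as `k → ∞`, and the errors `ε n` decay fast, then `u k` converges in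
modular for every finite measure dominated by `μ`. The limit is the a.e. limit of the
`w n = lim_k a n k`: the weights `c ^ n` absorb the `Δ₂` constant, so that
`2 ^ n * (w n - w (n + 1)) → 0` almost everywhere. -/
lemma exists_modular_limit {α : Type*} [MeasurableSpace α] {μ : Measure α}
    {G : ℝ → ℝ} (hG : IsOrlicz G) {c : ℝ} (hc : 2 < c)
    (h2 : ∀ t ≥ (0:ℝ), G (2 * t) ≤ c * G t)
    {u : ℕ → α → ℝ} (hu : ∀ k, Measurable (u k))
    {a : ℕ → ℕ → α → ℝ} (ha : ∀ n k, Measurable (a n k))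
    {w : ℕ → α → ℝ} (hw : ∀ n, Measurable (w n))
    (hlim : ∀ n x, Tendsto (fun k => a n k x) atTop (𝓝 (w n x)))
    {B : ℕ → ℝ} (hB : ∀ n k x, |a n k x| ≤ B n)
    {ε : ℕ → ℝ≥0∞} (hε : ∀ n k, ∫⁻ x, orl G (u k x - a n k x) ∂μ ≤ ε n)
    (hanti : Antitone ε) (hε0 : Tendsto ε atTop (𝓝 0))
    (hsum : ∑' n, ENNReal.ofReal c ^ n * ε n ≠ ⊤) :
    ∃ v : α → ℝ, Measurable v ∧ ∀ ν : Measure α, IsFiniteMeasure ν → ν ≤ μ →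
      Tendsto (fun k => ∫⁻ x, orl G (u k x - v x) ∂ν) atTop (𝓝 0) := by
  set C := ENNReal.ofReal c with hC
  have hCt : C ≠ ⊤ := ENNReal.ofReal_ne_top
  have hγ := orl_continuous hG
  -- The limiting step functions are Cauchy in modular.
  have hww : ∀ n m, ∫⁻ x, orl G (w n x - w m x) ∂μ ≤ C * (ε n + ε m) := by
    intro n m
    refine lintegral_le_of_ae_tendsto (F := fun k x => orl G (a n k x - a m k x))
      (fun k => hγ.measurable.comp ((ha n k).sub (ha m k)))
      (Eventually.of_forall fun x => (hγ.tendsto _).comp ((hlim n x).sub (hlim m x)))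
      (Eventually.of_forall fun k => ?_)
    have h := lintegral_orl_add_le (μ := μ) hG hc h2 (f := fun x => a n k x - u k x)
      (g := fun x => u k x - a m k x) ((ha n k).sub (hu k))
    simp only [sub_add_sub_cancel] at h
    refine h.trans ?_
    gcongr
    · refine le_trans (le_of_eq (lintegral_congr fun x => ?_)) (hε n k)
      rw [← orl_neg, neg_sub]
    · exact hε m k
  have hae : ∀ᵐ x ∂μ, ∃ l, Tendsto (fun n => w n x) atTop (𝓝 l) := by
    have hmeas : ∀ n, Measurable fun x => orl G (2 ^ n * (w n x - w (n + 1) x)) := fun n =>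
      hγ.measurable.comp (((hw n).sub (hw (n + 1))).const_mul _)
    have hfin : ∫⁻ x, ∑' n, orl G (2 ^ n * (w n x - w (n + 1) x)) ∂μ ≠ ⊤ := by
      rw [lintegral_tsum fun n => (hmeas n).aemeasurable]
      have hle : ∀ n, ∫⁻ x, orl G (2 ^ n * (w n x - w (n + 1) x)) ∂μ ≤
          (2 * C) * (C ^ n * ε n) := by
        intro n
        calc ∫⁻ x, orl G (2 ^ n * (w n x - w (n + 1) x)) ∂μ
            ≤ ∫⁻ x, C ^ n * orl G (w n x - w (n + 1) x) ∂μ :=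
              lintegral_mono fun x => orl_two_pow_mul_le hc h2 n _
          _ = C ^ n * ∫⁻ x, orl G (w n x - w (n + 1) x) ∂μ :=
              lintegral_const_mul' _ _ (ENNReal.pow_ne_top hCt)
          _ ≤ C ^ n * (C * (ε n + ε n)) := by
              gcongr
              refine (hww n (n + 1)).trans ?_
              gcongr
              exact hanti n.le_succ
          _ = (2 * C) * (C ^ n * ε n) := by ring
      refine ne_top_of_le_ne_top ?_ (ENNReal.tsum_le_tsum hle)
      rw [ENNReal.tsum_mul_left]
      exact ENNReal.mul_ne_top (ENNReal.mul_ne_top (by simp) hCt) hsum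
    filter_upwards [ae_lt_top (Measurable.tsum hmeas) hfin] with x hx
    have h0 := tendsto_zero_of_orl hG (ENNReal.tendsto_atTop_zero_of_tsum_ne_top hx.ne)
    obtain ⟨K, hK⟩ := (isBounded_iff_forall_norm_le.1 (isBounded_range_of_tendsto _ h0))
    refine cauchySeq_tendsto_of_complete
      (cauchySeq_of_le_geometric (1 / 2) K (by norm_num) fun n => ?_)
    have := hK _ ⟨n, rfl⟩
    rw [norm_mul, norm_pow, Real.norm_ofNat] at this
    rw [dist_eq_norm, one_div, inv_pow, ← div_eq_mul_inv, le_div_iff₀ (by positivity)]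
    linarith
  obtain ⟨v, hvm, hv⟩ := measurable_limit_of_tendsto_metrizable_ae
    (fun n => (hw n).aemeasurable) hae
  have hwv : ∀ n, ∫⁻ x, orl G (w n x - v x) ∂μ ≤ C * (ε n + ε n) := by
    intro n
    refine lintegral_le_of_ae_tendsto (F := fun m x => orl G (w n x - w m x))
      (fun m => hγ.measurable.comp ((hw n).sub (hw m)))
      (hv.mono fun x hx => (hγ.tendsto _).comp (tendsto_const_nhds.sub hx)) ?_
    filter_upwards [eventually_ge_atTop n] with m hm
    refine (hww n m).trans ?_
    gcongr
    exact hanti hm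
  refine ⟨v, hvm, fun ν hνf hν => ?_⟩
  have hI : ∀ n, Tendsto (fun k => ∫⁻ x, orl G (a n k x - w n x) ∂ν) atTop (𝓝 0) := by
    intro n
    have := tendsto_lintegral_of_dominated_convergence (μ := ν)
      (F := fun k x => orl G (a n k x - w n x)) (f := fun _ => 0)
      (fun _ => orl G (2 * B n))
      (fun k => hγ.measurable.comp ((ha n k).sub (hw n)))
      (fun k => Eventually.of_forall fun x => orl_mono hG ?_)
      (by
        rw [lintegral_const]
        exact ENNReal.mul_ne_top ENNReal.ofReal_ne_top (measure_ne_top ν _))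
      (Eventually.of_forall fun x => ?_)
    · simpa using this
    · have hwB : |w n x| ≤ B n :=
        le_of_tendsto ((hlim n x).abs) (Eventually.of_forall fun k => hB n k x)
      refine (abs_sub _ _).trans (le_trans ?_ (le_abs_self _))
      linarith [hB n k x]
    · have h1 := (hγ.tendsto _).comp ((hlim n x).sub_const (w n x))
      simpa [Function.comp_def, orl_zero hG] using h1
  have hbound : ∀ n k, ∫⁻ x, orl G (u k x - v x) ∂ν ≤
      C * (ε n + C * (∫⁻ x, orl G (a n k x - w n x) ∂ν + C * (ε n + ε n))) := by
    intro n k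
    have h := lintegral_orl_add_le (μ := ν) hG hc h2 (f := fun x => u k x - a n k x)
      (g := fun x => a n k x - v x) ((hu k).sub (ha n k))
    have h' := lintegral_orl_add_le (μ := ν) hG hc h2 (f := fun x => a n k x - w n x)
      (g := fun x => w n x - v x) ((ha n k).sub (hw n))
    simp only [sub_add_sub_cancel] at h h'
    refine h.trans ?_
    gcongr
    · exact (lintegral_mono' hν le_rfl).trans (hε n k)
    · refine h'.trans ?_
      gcongr
      exact (lintegral_mono' hν le_rfl).trans (hwv n)
  have hcm : ∀ {f : ℕ → ℝ≥0∞} {l : ℝ≥0∞}, Tendsto f atTop (𝓝 l) →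
      Tendsto (fun k => C * f k) atTop (𝓝 (C * l)) := fun hf =>
    ENNReal.Tendsto.const_mul hf (Or.inr hCt)
  have hn : Tendsto (fun n => C * (ε n + C * (0 + C * (ε n + ε n)))) atTop (𝓝 0) := by
    have := hcm (hε0.add (hcm ((tendsto_const_nhds (x := (0:ℝ≥0∞))).add (hcm (hε0.add hε0)))))
    simpa using this
  rw [ENNReal.tendsto_nhds_zero]
  intro η hη
  obtain ⟨n, hnη⟩ := (hn.eventually_lt_const hη).exists
  have hk : Tendsto (fun k => C * (ε n + C * (∫⁻ x, orl G (a n k x - w n x) ∂ν +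
      C * (ε n + ε n)))) atTop (𝓝 (C * (ε n + C * (0 + C * (ε n + ε n))))) :=
    hcm (tendsto_const_nhds.add (hcm ((hI n).add tendsto_const_nhds)))
  filter_upwards [hk.eventually_lt_const hnη] with k hk'
  exact (hbound n k).trans hk'.le

/-- Modular convergence on all finite measures below a `σ`-finite `μ` yields `μ`-a.e. convergence
along a subsequence: apply it to `μ` weighted by a positive integrable density. -/
lemma exists_subseq_ae_tendsto {α : Type*} [MeasurableSpace α] {μ : Measure α} [SigmaFinite μ]
    {G : ℝ → ℝ} (hG : IsOrlicz G) {u : ℕ → α → ℝ} (hu : ∀ k, Measurable (u k))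
    {v : α → ℝ} (hv : Measurable v)
    (h : ∀ ν : Measure α, IsFiniteMeasure ν → ν ≤ μ →
      Tendsto (fun k => ∫⁻ x, orl G (u k x - v x) ∂ν) atTop (𝓝 0)) :
    ∃ ns : ℕ → ℕ, StrictMono ns ∧ ∀ᵐ x ∂μ, Tendsto (fun i => u (ns i) x) atTop (𝓝 (v x)) := by
  obtain ⟨g, hgpos, hgm, hgint⟩ := exists_pos_lintegral_lt_of_sigmaFinite μ one_ne_zero
  set f : α → ℝ≥0∞ := fun x => min (g x) 1 with hf
  have hfm : Measurable f := hgm.coe_nnreal_ennreal.min measurable_const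
  have hle : μ.withDensity f ≤ μ := by
    conv_rhs => rw [← withDensity_one (μ := μ)]
    exact withDensity_mono (Eventually.of_forall fun x => min_le_right _ _)
  have hfin : IsFiniteMeasure (μ.withDensity f) := by
    refine isFiniteMeasure_withDensity (ne_top_of_le_ne_top hgint.ne_top ?_)
    exact lintegral_mono fun x => min_le_left _ _
  have hT := h _ hfin hle
  have hM : TendstoInMeasure (μ.withDensity f) (fun k x => G |u k x - v x|) atTop
      (fun _ => (0:ℝ)) := by
    refine tendstoInMeasure_of_tendsto_eLpNorm one_ne_zero (fun k =>
      (hG.continuous_abs.measurable.comp ((hu k).sub hv)).aestronglyMeasurable)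
      aestronglyMeasurable_const ?_
    refine hT.congr fun k => ?_
    rw [eLpNorm_one_eq_lintegral_enorm]
    refine lintegral_congr fun x => ?_
    simp only [Pi.sub_apply, sub_zero]
    rw [Real.enorm_of_nonneg (hG.1 _ (abs_nonneg _))]
    rfl
  obtain ⟨ns, hns, hae⟩ := hM.exists_seq_tendsto_ae
  refine ⟨ns, hns, ?_⟩
  have hac : μ ≪ μ.withDensity f := withDensity_absolutelyContinuous' hfm.aemeasurable
    (Eventually.of_forall fun x => by simp [hf, (hgpos x).ne'])
  filter_upwards [hac.ae_le hae] with x hx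
  have h0 : Tendsto (fun i => orl G (u (ns i) x - v x)) atTop (𝓝 0) := by
    simpa [orl] using ENNReal.tendsto_ofReal hx
  simpa using (tendsto_zero_of_orl hG h0).add_const (v x)

/-! ### Lower semicontinuity of the energy -/

/-- The integrand of `PsiG` as a function on the product space, extended by zero off the strip
`‖x - y‖ < δ`. -/
noncomputable def psiKernel (N : ℕ) (s δ : ℝ) (G : ℝ → ℝ) (u : Euc N → ℝ) (z : Euc N × Euc N) :
    ℝ≥0∞ :=
  {z : Euc N × Euc N | dist z.2 z.1 < δ}.indicator
    (fun z => ENNReal.ofReal (G (|u z.1 - u z.2| / ‖z.1 - z.2‖ ^ s) / ‖z.1 - z.2‖ ^ (N : ℝ))) z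

lemma psiKernel_eq (N : ℕ) (s δ : ℝ) (G : ℝ → ℝ) (u : Euc N → ℝ) (z : Euc N × Euc N) :
    psiKernel N s δ G u z = {z : Euc N × Euc N | dist z.2 z.1 < δ}.indicator
      (fun z => ENNReal.ofReal (G |(u z.1 - u z.2) / ‖z.1 - z.2‖ ^ s| /
        ‖z.1 - z.2‖ ^ (N : ℝ))) z := by
  have : ∀ z : Euc N × Euc N, |(u z.1 - u z.2) / ‖z.1 - z.2‖ ^ s| =
      |u z.1 - u z.2| / ‖z.1 - z.2‖ ^ s := fun z => by
    rw [abs_div, abs_of_nonneg (Real.rpow_nonneg (norm_nonneg _) s)]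
  simp only [psiKernel, this]

lemma measurable_psiKernel {N : ℕ} {s δ : ℝ} {G : ℝ → ℝ} (hG : IsOrlicz G) {u : Euc N → ℝ}
    (hu : Measurable u) : Measurable (psiKernel N s δ G u) := by
  rw [funext (psiKernel_eq N s δ G u)]
  have h1 : Measurable fun z : Euc N × Euc N => u z.1 - u z.2 :=
    (hu.comp measurable_fst).sub (hu.comp measurable_snd)
  have h2 : Measurable fun z : Euc N × Euc N => ‖z.1 - z.2‖ := by fun_prop
  refine Measurable.indicator ?_ ?_
  · exact ((hG.continuous_abs.measurable.comp (h1.div (h2.pow_const s))).div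
      (h2.pow_const (N : ℝ))).ennreal_ofReal
  · exact measurableSet_lt (by fun_prop) measurable_const

lemma PsiG_eq {N : ℕ} {s δ : ℝ} {G : ℝ → ℝ} (hG : IsOrlicz G) {u : Euc N → ℝ}
    (hu : Measurable u) :
    PsiG N s δ G u = ∫⁻ z, psiKernel N s δ G u z ∂(volume.prod volume) := by
  rw [lintegral_prod _ (measurable_psiKernel hG hu).aemeasurable]
  refine lintegral_congr fun x => ?_
  rw [← lintegral_indicator measurableSet_ball]
  rfl

lemma PsiG_le_of_ae_tendsto {N : ℕ} {s δ : ℝ} {G : ℝ → ℝ} (hG : IsOrlicz G)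
    {u : ℕ → Euc N → ℝ} (hu : ∀ k, Measurable (u k)) {v : Euc N → ℝ} (hv : Measurable v)
    (hlim : ∀ᵐ x, Tendsto (fun k => u k x) atTop (𝓝 (v x))) {M : ℝ≥0∞}
    (hM : ∀ k, PsiG N s δ G (u k) ≤ M) : PsiG N s δ G v ≤ M := by
  rw [PsiG_eq hG hv]
  refine lintegral_le_of_ae_tendsto (fun k => measurable_psiKernel hG (hu k)) ?_
    (Eventually.of_forall fun k => (PsiG_eq hG (hu k)).symm.trans_le (hM k))
  have h1 : ∀ᵐ z : Euc N × Euc N ∂(volume.prod volume),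
      Tendsto (fun k => u k z.1) atTop (𝓝 (v z.1)) := Measure.quasiMeasurePreserving_fst.ae hlim
  have h2 : ∀ᵐ z : Euc N × Euc N ∂(volume.prod volume),
      Tendsto (fun k => u k z.2) atTop (𝓝 (v z.2)) := Measure.quasiMeasurePreserving_snd.ae hlim
  filter_upwards [h1, h2] with z hz1 hz2
  simp only [psiKernel_eq, Set.indicator]
  split_ifs
  · refine ENNReal.tendsto_ofReal (Tendsto.div_const ?_ _)
    exact (hG.continuous_abs.tendsto _).comp ((hz1.sub hz2).div_const _)
  · exact tendsto_const_nhds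

/-! ### Compactness in modular -/

/-- **Rellich–Kondrachov type compactness** (Theorem 2.9 / `teo:compact`):
a sequence bounded in the modular sense has a subsequence converging in `L^G_loc`. -/
theorem compactness_LGloc
    (N : ℕ) (hN : 1 ≤ N) (δ : ℝ) (hδ : 0 < δ) (s : ℝ) (hs0 : 0 < s) (hs1 : s < 1)
    (G : ℝ → ℝ) (hG : IsOrlicz G)
    (u : ℕ → Euc N → ℝ) (hum : ∀ k, Measurable (u k))
    (hbdd : (⨆ k, (PsiG N s δ G (u k) + PhiG N G (u k))) < ⊤) :
    ∃ v : Euc N → ℝ, Measurable v ∧ PhiG N G v < ⊤ ∧ PsiG N s δ G v < ⊤ ∧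
      ∃ φ : ℕ → ℕ, StrictMono φ ∧ ∀ K : Set (Euc N), IsCompact K →
        Tendsto (fun j => ∫⁻ x in K, ENNReal.ofReal (G |u (φ j) x - v x|))
          atTop (𝓝 0) := by
  obtain ⟨c, hc, h2⟩ := hG.2.2.2.2.2.2
  have hc0 : 0 < c := by linarith
  set M := ⨆ k, (PsiG N s δ G (u k) + PhiG N G (u k)) with hMdef
  have hΨ : ∀ k, PsiG N s δ G (u k) ≤ M := fun k =>
    le_self_add.trans (le_iSup (fun k => PsiG N s δ G (u k) + PhiG N G (u k)) k)
  have hΦ : ∀ k, PhiG N G (u k) ≤ M := fun k =>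
    le_add_self.trans (le_iSup (fun k => PsiG N s δ G (u k) + PhiG N G (u k)) k)
  have hΦt : ∀ k, PhiG N G (u k) ≠ ⊤ := fun k => ne_top_of_le_ne_top hbdd.ne (hΦ k)
  -- Grid sizes `r n = r₀ * θ ^ n`, with `θ ^ s = 1 / (2 c)` so that the approximation error
  -- `O(r n ^ s)` stays summable after multiplication by `c ^ n`.
  set θ : ℝ := ((2 * c)⁻¹) ^ s⁻¹ with hθ
  have hθ0 : 0 < θ := by positivity
  have hcinv : (2 * c)⁻¹ ≤ 1 := inv_le_one_of_one_le₀ (by linarith)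
  have hθ1 : θ ≤ 1 := Real.rpow_le_one (by positivity) hcinv (by positivity)
  have hθs : θ ^ s = (2 * c)⁻¹ := Real.rpow_inv_rpow (by positivity) hs0.ne'
  set r₀ : ℝ := min δ 1 / (N + 1) with hr₀
  have hr₀0 : 0 < r₀ := by positivity
  set r : ℕ → ℝ := fun n => r₀ * θ ^ n with hr
  have hr0 : ∀ n, 0 < r n := fun n => by positivity
  have hrle : ∀ n, (N + 1) * r n ≤ min δ 1 := by
    intro n
    calc (N + 1) * r n ≤ (N + 1) * (r₀ * 1) := by
          simp only [hr]; gcongr; exact pow_le_one₀ hθ0.le hθ1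
      _ = min δ 1 := by rw [hr₀]; field_simp
  set D : ℝ := (N + 1 : ℝ) ^ (s + N) * r₀ ^ s with hD
  have hD0 : 0 ≤ D := by positivity
  have hrs : ∀ n, (N + 1 : ℝ) ^ (s + N) * r n ^ s = D * ((2 * c)⁻¹) ^ n := by
    intro n
    simp only [hr]
    rw [Real.mul_rpow hr₀0.le (by positivity), ← Real.rpow_natCast, ← Real.rpow_mul hθ0.le,
      mul_comm (n : ℝ) s, Real.rpow_mul hθ0.le, hθs, Real.rpow_natCast, hD, mul_assoc]
  set ε : ℕ → ℝ≥0∞ := fun n => ENNReal.ofReal (D * ((2 * c)⁻¹) ^ n) * M with hεdef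
  have hε : ∀ n k, ∫⁻ x, orl G (u k x - cellAvg (r n) (u k) (cellIdx (r n) x)) ≤ ε n := by
    intro n k
    refine (lintegral_sub_cellAvg_le hG hs0 (hum k) (hΦt k) (hr0 n)
      ((hrle n).trans (min_le_left _ _)) ((hrle n).trans (min_le_right _ _))).trans ?_
    rw [hrs n]
    exact mul_le_mul_right (hΨ k) _
  have hanti : Antitone ε := by
    intro m n hmn
    simp only [hεdef]
    gcongr ENNReal.ofReal (D * ?_) * M
    exact pow_le_pow_of_le_one (by positivity) hcinv hmn
  have hsum : ∑' n, ENNReal.ofReal c ^ n * ε n ≠ ⊤ := by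
    have : ∀ n, ENNReal.ofReal c ^ n * ε n = ENNReal.ofReal D * M * (2⁻¹) ^ n := by
      intro n
      have h1 : ENNReal.ofReal c ^ n * ENNReal.ofReal (D * ((2 * c)⁻¹) ^ n) =
          ENNReal.ofReal D * 2⁻¹ ^ n := by
        rw [← ENNReal.ofReal_pow hc0.le, ← ENNReal.ofReal_mul (by positivity),
          show c ^ n * (D * ((2 * c)⁻¹) ^ n) = D * (2⁻¹ : ℝ) ^ n by
            rw [mul_inv, mul_pow, inv_pow c]; field_simp,
          ENNReal.ofReal_mul hD0, ENNReal.ofReal_pow (by norm_num),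
          ENNReal.ofReal_inv_of_pos (by norm_num)]
        norm_num
      simp only [hεdef]
      rw [← mul_assoc, h1]
      ring
    simp only [this]
    rw [ENNReal.tsum_mul_left, ENNReal.tsum_geometric]
    refine ENNReal.mul_ne_top (ENNReal.mul_ne_top ENNReal.ofReal_ne_top hbdd.ne) ?_
    simp
  have hε0 : Tendsto ε atTop (𝓝 0) := by
    refine tendsto_of_tendsto_of_tendsto_of_le_of_le tendsto_const_nhds
      (ENNReal.tendsto_atTop_zero_of_tsum_ne_top hsum) (fun n => zero_le) fun n => ?_
    refine le_mul_of_one_le_left (zero_le) (one_le_pow₀ ?_)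
    rw [ENNReal.one_le_ofReal]; linarith
  -- Tychonoff: a subsequence along which the means over all cells of all grids converge.
  set B : ℕ → ℝ := fun n => 1 + (r n ^ N)⁻¹ * ((G 1)⁻¹ * M.toReal) with hB
  have hcomp : IsCompact (Set.univ.pi fun p : ℕ × (Fin N → ℤ) => Set.Icc (-B p.1) (B p.1)) :=
    isCompact_univ_pi fun p => isCompact_Icc
  have habs : ∀ n k ν, |cellAvg (r n) (u k) ν| ≤ B n := fun n k ν =>
    abs_cellAvg_le hG (hum k) hbdd.ne (hΦ k) (hr0 n) ν
  obtain ⟨L, -, φ, hφ, hL⟩ := hcomp.tendsto_subseq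
    (x := fun k (p : ℕ × (Fin N → ℤ)) => cellAvg (r p.1) (u k) p.2)
    (fun k p _ => abs_le.1 (habs p.1 k p.2))
  rw [tendsto_pi_nhds] at hL
  obtain ⟨v, hvm, hv⟩ := exists_modular_limit (μ := volume) hG hc h2
    (u := fun j => u (φ j)) (fun j => hum _)
    (a := fun n j x => cellAvg (r n) (u (φ j)) (cellIdx (r n) x))
    (fun n j => (measurable_of_countable (cellAvg (r n) (u (φ j)))).comp (measurable_cellIdx (r n)))
    (w := fun n x => L (n, cellIdx (r n) x))
    (fun n => (measurable_of_countable fun ν => L (n, ν)).comp (measurable_cellIdx (r n)))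
    (fun n x => hL (n, cellIdx (r n) x))
    (B := B) (fun n j x => habs n (φ j) _) (ε := ε) (fun n j => hε n (φ j)) hanti hε0 hsum
  obtain ⟨ns, hns, hae⟩ := exists_subseq_ae_tendsto hG (fun j => hum (φ j)) hvm hv
  refine ⟨v, hvm, ?_, ?_, φ, hφ, fun K hK => ?_⟩
  · refine lt_of_le_of_lt ?_ hbdd
    exact lintegral_le_of_ae_tendsto (F := fun i x => orl G (u (φ (ns i)) x))
      (fun i => (orl_continuous hG).measurable.comp (hum _))
      (hae.mono fun x hx => ((orl_continuous hG).tendsto _).comp hx)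
      (Eventually.of_forall fun i => hΦ _)
  · exact (PsiG_le_of_ae_tendsto hG (fun i => hum (φ (ns i))) hvm hae fun i => hΨ _).trans_lt hbdd
  · exact hv (volume.restrict K) ⟨by simpa using hK.measure_lt_top⟩ Measure.restrict_le_self
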